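/- Let -∞ < a < b < ∞, 1 < p < ∞ with conjugate exponent p' = p/(p−1), let μ, w and τ be weights on [a,b], and let Φ be a Young function that is submultiplicative and invertible on [0,∞) such that Λ(t) = Φ(t^{1/p}) is convex. Define S(p,Φ,μ,τ,w) := sup_{a<x<b} { [Φ^{-1}(μ[x,b]^{-1/2})]^{-2} · (∫_a^x τ(t)^{p'} w(t)^{1−p'} dt)^{1/p'} }. If S(p,Φ,μ,τ,w) < ∞, then for every f ∈ L_w^p[a,b], ‖ x ↦ ∫_a^x f(t) τ(t) dt ‖_{L_μ^Φ[a,b]} ≤ C₀(Φ) · S(p,Φ,μ,τ,w) · ‖f‖_{L_w^p[a,b]}, where C₀(Φ) := 2·[Φ^{-1}(1/2)]^{-1}. -/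

import Mathlib

open MeasureTheory Set Filter
open scoped ENNReal NNReal

noncomputable section

/-- A Young function: even, convex, vanishing at `0`, nonnegative, tending to `∞`. -/
def IsYoung (Φ : ℝ → ℝ) : Prop :=
  ConvexOn ℝ Set.univ Φ ∧ (∀ t, Φ (-t) = Φ t) ∧ Φ 0 = 0 ∧ (∀ t, 0 ≤ Φ t) ∧
    Filter.Tendsto Φ Filter.atTop Filter.atTop

/-- A weight on `[a,b]`: nonnegative, measurable, positive a.e. on `[a,b]`. -/
def IsWeight (w : ℝ → ℝ) (a b : ℝ) : Prop :=
  Measurable w ∧ (∀ x, 0 ≤ w x) ∧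
    ∀ᵐ x ∂(MeasureTheory.volume.restrict (Set.Icc a b)), 0 < w x

/-- `Φ` is submultiplicative on `[0,∞)`. -/
def Submult (Φ : ℝ → ℝ) : Prop :=
  ∀ s t : ℝ, 0 ≤ s → 0 ≤ t → Φ (s * t) ≤ Φ s * Φ t

/-- `Φinv` is the inverse of `Φ` restricted to `[0,∞)`. -/
def IsYoungInv (Φ Φinv : ℝ → ℝ) : Prop :=
  (∀ t, 0 ≤ t → 0 ≤ Φinv t) ∧ (∀ t, 0 ≤ t → Φ (Φinv t) = t) ∧
    (∀ t, 0 ≤ t → Φinv (Φ t) = t)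

/-- `μ[x,y] := ∫ₓ^y μ(t) dt`, as an extended nonnegative real. -/
def wInt (μ : ℝ → ℝ) (x y : ℝ) : ℝ≥0∞ :=
  ∫⁻ t in Set.Icc x y, ENNReal.ofReal (μ t)

/-- The Luxemburg (gauge) norm of `f` on `[a,b]` w.r.t. the Young function `Φ`
and the weight `μ`: `inf {k > 0 : ∫ₐ^b Φ(f/k) μ ≤ 1}` (`∞` if no such `k`). -/
def luxNorm (Φ μ : ℝ → ℝ) (a b : ℝ) (f : ℝ → ℝ) : ℝ≥0∞ :=
  sInf {k : ℝ≥0∞ | ∃ c : ℝ, 0 < c ∧ k = ENNReal.ofReal c ∧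
    (∫⁻ x in Set.Icc a b, ENNReal.ofReal (Φ (f x / c) * μ x)) ≤ 1}

/-- `f` is Lipschitz on `[a,b]` and `f'` is a.e. its derivative on `(a,b)`. -/
def LipschitzWithDeriv (f f' : ℝ → ℝ) (a b : ℝ) : Prop :=
  (∃ K, LipschitzOnWith K f (Set.Icc a b)) ∧
    ∀ᵐ x ∂(MeasureTheory.volume.restrict (Set.Ioo a b)), HasDerivAt f (f' x) x

/-- The weighted `L^p` norm `(∫ₐ^b |g|^p w)^{1/p}`, as an extended nonnegative real. -/
def lpNorm (w : ℝ → ℝ) (p a b : ℝ) (g : ℝ → ℝ) : ℝ≥0∞ :=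
  (∫⁻ t in Set.Icc a b, ENNReal.ofReal (|g t| ^ p * w t)) ^ (1 / p)

/-- The Luxemburg (gauge) norm on a general measure space. -/
def luxNormGen {Ω : Type*} [MeasurableSpace Ω] (Φ : ℝ → ℝ) (μ : Measure Ω)
    (f : Ω → ℝ) : ℝ≥0∞ :=
  sInf {k : ℝ≥0∞ | ∃ c : ℝ, 0 < c ∧ k = ENNReal.ofReal c ∧
    (∫⁻ x, ENNReal.ofReal (Φ (f x / c)) ∂μ) ≤ 1}

/-- The Luxemburg (gauge) norm for an extended-real-valued Young function. -/
def luxNormE {Ω : Type*} [MeasurableSpace Ω] (Ψ : ℝ → ℝ≥0∞) (μ : Measure Ω)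
    (f : Ω → ℝ) : ℝ≥0∞ :=
  sInf {k : ℝ≥0∞ | ∃ c : ℝ, 0 < c ∧ k = ENNReal.ofReal c ∧
    (∫⁻ x, Ψ (f x / c) ∂μ) ≤ 1}

/-!
Write `m(x) = μ[x,∞)`, `ψ = Φ⁻¹(m^{-1/2})` and `V(x) = σ(-∞,x]`, where `σ = τ^{p'} w^{1-p'} dt` and
`f τ dt = g dσ`. The hypothesis says `V^{1/p'} ≤ S ψ²`. Hölder's inequality for `g = (g ψ) ψ⁻¹`,
together with `∫_{(-∞,x]} V^{-1/2} dσ ≤ 2 V(x)^{1/2}`, gives the pointwise bound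
`|∫_{(-∞,x]} g dσ| ≤ 2 S ψ(x) (∫_{(-∞,x]} |g|^p ψ^p dσ)^{1/p}`. After normalizing `|g|^p dσ` to a
probability measure `ν`, Jensen's inequality for `Λ` and submultiplicativity of `Φ` bound `Φ` of the
normalized left side by `(1/2) ∫_{(-∞,x]} m(x)^{-1/2} m(t)^{-1/2} dν(t)`. Finally Tonelli and the
same layer-cake estimate for `m`, namely `∫_{[t,∞)} m^{-1/2} dμ ≤ 2 m(t)^{1/2}`, make the modular at
most one.
-/

section LayerCake

theorem lintegral_Ioi_min_rpow_neg_inv_le {M α : ℝ} (hM : 0 < M) (hα : 0 < α) (hα1 : α < 1) :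
    ∫⁻ u in Ioi (0 : ℝ), min (ENNReal.ofReal M) (ENNReal.ofReal (u ^ (-α⁻¹))) ≤
      ENNReal.ofReal ((1 - α)⁻¹ * M ^ (1 - α)) := by
  set R : ℝ := M ^ (-α) with hR
  have hRpos : 0 < R := Real.rpow_pos_of_pos hM _
  have hexp : -α⁻¹ < -1 := neg_lt_neg ((one_lt_inv₀ hα).2 hα1)
  have hnear : ∫⁻ u in Ioc 0 R, min (ENNReal.ofReal M) (ENNReal.ofReal (u ^ (-α⁻¹))) ≤
      ENNReal.ofReal (M ^ (1 - α)) :=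
    calc _ ≤ ∫⁻ _ in Ioc 0 R, ENNReal.ofReal M := lintegral_mono fun _ => min_le_left _ _
      _ = ENNReal.ofReal (M ^ (1 - α)) := by
        rw [setLIntegral_const, Real.volume_Ioc, ← ENNReal.ofReal_mul hM.le, sub_zero, hR,
          sub_eq_add_neg, Real.rpow_add hM, Real.rpow_one]
  have hfar : ∫⁻ u in Ioi R, min (ENNReal.ofReal M) (ENNReal.ofReal (u ^ (-α⁻¹))) ≤
      ENNReal.ofReal (α / (1 - α) * M ^ (1 - α)) :=
    calc _ ≤ ∫⁻ u in Ioi R, ENNReal.ofReal (u ^ (-α⁻¹)) := lintegral_mono fun _ => min_le_right _ _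
      _ = ENNReal.ofReal (-R ^ (-α⁻¹ + 1) / (-α⁻¹ + 1)) := by
        rw [← integral_Ioi_rpow_of_lt hexp hRpos, ofReal_integral_eq_lintegral_ofReal
          (integrableOn_Ioi_rpow_of_lt hexp hRpos) ((ae_restrict_mem measurableSet_Ioi).mono
            fun u hu => Real.rpow_nonneg (hRpos.trans hu).le _)]
      _ = ENNReal.ofReal (α / (1 - α) * M ^ (1 - α)) := by
        rw [hR, ← Real.rpow_mul hM.le, show -α * (-α⁻¹ + 1) = 1 - α by field_simp; ring]
        have hα1' : 1 - α ≠ 0 := (sub_pos.2 hα1).ne'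
        have hα1'' : -1 + α ≠ 0 := by linarith
        congr 1
        field_simp
        ring
  calc _ ≤ ENNReal.ofReal (M ^ (1 - α)) + ENNReal.ofReal (α / (1 - α) * M ^ (1 - α)) := by
        rw [← Ioc_union_Ioi_eq_Ioi hRpos.le]
        exact (lintegral_union_le _ _ _).trans (add_le_add hnear hfar)
    _ = ENNReal.ofReal ((1 - α)⁻¹ * M ^ (1 - α)) := by
      have hα1' : 0 < 1 - α := sub_pos.2 hα1
      rw [← ENNReal.ofReal_add (by positivity) (by positivity)]
      congr 1
      field_simp
      ring

theorem ae_ne_zero_of_measure_lt_le {Ω : Type*} [MeasurableSpace Ω] {ν : Measure Ω} {G : Ω → ℝ≥0∞}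
    (hGν : ∀ s, ν {t | G t < s} ≤ s) : ∀ᵐ t ∂ν, G t ≠ 0 := by
  refine nonpos_iff_eq_zero.1 (ENNReal.le_of_forall_pos_le_add fun ε hε _ => ?_)
  refine (measure_mono fun t ht => ?_).trans ((hGν ε).trans (by simp))
  simpa [not_not.1 ht] using hε

theorem lintegral_rpow_neg_le {Ω : Type*} [MeasurableSpace Ω] {ν : Measure Ω} {G : Ω → ℝ≥0∞}
    (hG : Measurable G) (hGν : ∀ s, ν {t | G t < s} ≤ s) {α : ℝ} (hα : 0 < α) (hα1 : α < 1) :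
    ∫⁻ t, G t ^ (-α) ∂ν ≤ ENNReal.ofReal (1 - α)⁻¹ * ν univ ^ (1 - α) := by
  have hα1' : 0 < 1 - α := sub_pos.2 hα1
  rcases eq_or_ne (ν univ) 0 with hν | hν
  · simp [Measure.measure_univ_eq_zero.1 hν]
  rcases eq_or_ne (ν univ) ⊤ with hν' | hν'
  · simp [hν', hα1']
  have hreal : ∀ᵐ t ∂ν, G t ^ (-α) = ENNReal.ofReal (G t ^ (-α)).toReal := by
    filter_upwards [ae_ne_zero_of_measure_lt_le hGν] with t ht
    exact (ENNReal.ofReal_toReal (by simp [ht, hα.not_gt, ENNReal.rpow_eq_top_iff])).symm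
  have hlevel : ∀ u ∈ Ioi (0 : ℝ), ν {t | u < (G t ^ (-α)).toReal} ≤
      min (ENNReal.ofReal (ν univ).toReal) (ENNReal.ofReal (u ^ (-α⁻¹))) := by
    intro u hu
    refine le_min ?_ (le_trans (measure_mono fun t ht => ?_) (hGν _))
    · rw [ENNReal.ofReal_toReal hν']
      exact measure_mono (subset_univ _)
    · rw [mem_Ioi] at hu
      refine lt_of_not_ge fun (h : ENNReal.ofReal _ ≤ G t) =>
        (ENNReal.toReal_le_of_le_ofReal hu.le ?_).not_gt ht
      calc G t ^ (-α) ≤ ENNReal.ofReal (u ^ (-α⁻¹)) ^ (-α) := by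
            simp only [ENNReal.rpow_neg]
            exact ENNReal.inv_le_inv.2 (ENNReal.rpow_le_rpow h hα.le)
        _ = ENNReal.ofReal u := by
          rw [ENNReal.ofReal_rpow_of_pos (Real.rpow_pos_of_pos hu _), ← Real.rpow_mul hu.le,
            neg_mul_neg, inv_mul_cancel₀ hα.ne', Real.rpow_one]
  have hM : 0 < (ν univ).toReal := ENNReal.toReal_pos hν hν'
  rw [lintegral_congr_ae hreal, lintegral_eq_lintegral_meas_lt ν
    (Eventually.of_forall fun _ => ENNReal.toReal_nonneg)
    (hG.pow_const _).ennreal_toReal.aemeasurable]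
  calc _ ≤ _ := setLIntegral_mono' measurableSet_Ioi hlevel
    _ ≤ _ := lintegral_Ioi_min_rpow_neg_inv_le hM hα hα1
    _ = _ := by
      rw [ENNReal.ofReal_mul (by positivity), ← ENNReal.ofReal_rpow_of_pos hM,
        ENNReal.ofReal_toReal hν']

end LayerCake

section LinearOrder

theorem measurable_measure_Iic {α : Type*} [LinearOrder α] [TopologicalSpace α] [OrderTopology α]
    [MeasurableSpace α] [BorelSpace α] (ν : Measure α) : Measurable fun t => ν (Iic t) :=
  Monotone.measurable fun _ _ hst => measure_mono (Iic_subset_Iic.2 hst)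

theorem measurable_measure_Ici {α : Type*} [LinearOrder α] [TopologicalSpace α] [OrderTopology α]
    [MeasurableSpace α] [BorelSpace α] (ν : Measure α) : Measurable fun t => ν (Ici t) :=
  measurable_measure_Iic (α := αᵒᵈ) ν

variable {α : Type*} [LinearOrder α] [TopologicalSpace α] [OrderTopology α]
  [SecondCountableTopology α] [MeasurableSpace α]

theorem measure_setOf_measure_Iic_lt_le (ν : Measure α) (s : ℝ≥0∞) :
    ν {t | ν (Iic t) < s} ≤ s := by
  set A : Set α := {t | ν (Iic t) < s}
  by_cases hmax : ∃ t, IsGreatest A t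
  · obtain ⟨t, htA, ht⟩ := hmax
    exact (measure_mono ht).trans htA.le
  -- Without a greatest element, `A` is exhausted by countably many rays `Iic t` with `t ∈ A`.
  obtain ⟨T, hTA, hTc, hT⟩ := TopologicalSpace.isOpen_biUnion_countable A Iio fun _ _ => isOpen_Iio
  have hcover : A ⊆ ⋃ t ∈ T, Iic t := by
    intro t ht
    obtain ⟨u, hu, htu⟩ : ∃ u ∈ A, t < u := by
      by_contra! h
      exact hmax ⟨t, ht, h⟩
    have hmem : t ∈ ⋃ i ∈ T, Iio i := hT ▸ mem_biUnion hu htu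
    exact biUnion_mono subset_rfl (fun _ _ => Iio_subset_Iic_self) hmem
  have hdir : DirectedOn (Function.onFun (· ⊆ ·) (Iic : α → Set α)) T :=
    (DirectedOn.of_linearOrder T).mono fun _ _ h => Iic_subset_Iic.2 h
  calc ν A ≤ ν (⋃ t ∈ T, Iic t) := measure_mono hcover
    _ = ⨆ t ∈ T, ν (Iic t) := measure_biUnion_eq_iSup hTc hdir
    _ ≤ s := iSup₂_le fun t ht => (hTA ht).le

theorem ae_measure_Iic_ne_zero (ν : Measure α) : ∀ᵐ t ∂ν, ν (Iic t) ≠ 0 :=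
  ae_ne_zero_of_measure_lt_le (measure_setOf_measure_Iic_lt_le ν)

theorem ae_measure_Ici_ne_zero (ν : Measure α) : ∀ᵐ t ∂ν, ν (Ici t) ≠ 0 :=
  ae_measure_Iic_ne_zero (α := αᵒᵈ) ν

variable [BorelSpace α]

theorem setLIntegral_measure_Iic_rpow_neg_le (ν : Measure α) (x : α) {r : ℝ} (hr : 0 < r)
    (hr1 : r < 1) :
    ∫⁻ t in Iic x, ν (Iic t) ^ (-r) ∂ν ≤ ENNReal.ofReal (1 - r)⁻¹ * ν (Iic x) ^ (1 - r) := by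
  calc ∫⁻ t in Iic x, ν (Iic t) ^ (-r) ∂ν
      = ∫⁻ t in Iic x, ν.restrict (Iic x) (Iic t) ^ (-r) ∂ν :=
        setLIntegral_congr_fun measurableSet_Iic fun t ht => by
          simp only [Measure.restrict_apply measurableSet_Iic, Iic_inter_Iic, min_eq_left ht]
    _ ≤ _ := lintegral_rpow_neg_le (measurable_measure_Iic _) (measure_setOf_measure_Iic_lt_le _)
      hr hr1
    _ = _ := by rw [Measure.restrict_apply_univ]

theorem setLIntegral_measure_Iic_rpow_neg_half_le (ν : Measure α) (x : α) :
    ∫⁻ t in Iic x, ν (Iic t) ^ (-(1 / 2) : ℝ) ∂ν ≤ 2 * ν (Iic x) ^ (1 / 2 : ℝ) :=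
  (setLIntegral_measure_Iic_rpow_neg_le ν x one_half_pos one_half_lt_one).trans_eq (by norm_num)

theorem setLIntegral_measure_Ici_rpow_neg_half_le (ν : Measure α) (x : α) :
    ∫⁻ t in Ici x, ν (Ici t) ^ (-(1 / 2) : ℝ) ∂ν ≤ 2 * ν (Ici x) ^ (1 / 2 : ℝ) :=
  setLIntegral_measure_Iic_rpow_neg_half_le (α := αᵒᵈ) ν x

theorem inv_le_mul_inv_of_le_mul {A B C : ℝ≥0∞} (h : A ≤ B * C) (hA : A ≠ 0) (hB : B ≠ ⊤) :
    C⁻¹ ≤ B * A⁻¹ :=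
  calc C⁻¹ ≤ (A / B)⁻¹ := ENNReal.inv_le_inv.2 (ENNReal.div_le_of_le_mul' h)
    _ = B * A⁻¹ := ENNReal.inv_div (Or.inl hB) (Or.inr hA)

theorem rpow_neg_le_of_rpow_inv_le {V S c : ℝ≥0∞} {q : ℝ} (hq : 0 < q) (hV : V ≠ 0) (hS : S ≠ ⊤)
    (h : V ^ (1 / q) ≤ S * c ^ 2) : c ^ (-q) ≤ S ^ (q / 2) * V ^ (-(1 / 2) : ℝ) := by
  have hpow : V ^ (1 / 2 : ℝ) ≤ S ^ (q / 2) * c ^ q :=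
    calc V ^ (1 / 2 : ℝ) = (V ^ (1 / q)) ^ (q / 2) := by
          rw [← ENNReal.rpow_mul]
          congr 1
          field_simp
      _ ≤ (S * c ^ 2) ^ (q / 2) := ENNReal.rpow_le_rpow h (by positivity)
      _ = S ^ (q / 2) * c ^ q := by
        rw [ENNReal.mul_rpow_of_nonneg _ _ (by positivity), ← ENNReal.rpow_natCast,
          ← ENNReal.rpow_mul, Nat.cast_ofNat, mul_div_cancel₀ q two_ne_zero]
  rw [ENNReal.rpow_neg, ENNReal.rpow_neg]
  exact inv_le_mul_inv_of_le_mul hpow (by simp [hV])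
    (ENNReal.rpow_ne_top_of_nonneg (by positivity) hS)

theorem lintegral_rpow_neg_rpow_inv_le {σ : Measure α} {ψ : α → ℝ≥0∞} {S : ℝ≥0∞} {q : ℝ} {x : α}
    (hq : 1 ≤ q) (hS : S ≠ ⊤) (hψ : ∀ t ≤ x, σ (Iic t) ^ (1 / q) ≤ S * ψ t ^ 2) :
    (∫⁻ t in Iic x, ψ t ^ (-q) ∂σ) ^ (1 / q) ≤ 2 * S * ψ x := by
  have hq0 : 0 < q := zero_lt_one.trans_le hq
  have hint : ∫⁻ t in Iic x, ψ t ^ (-q) ∂σ ≤ S ^ (q / 2) * (2 * σ (Iic x) ^ (1 / 2 : ℝ)) :=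
    calc ∫⁻ t in Iic x, ψ t ^ (-q) ∂σ
        ≤ ∫⁻ t in Iic x, S ^ (q / 2) * σ (Iic t) ^ (-(1 / 2) : ℝ) ∂σ := by
          refine lintegral_mono_ae ?_
          filter_upwards [ae_restrict_mem measurableSet_Iic,
            ae_restrict_of_ae (ae_measure_Iic_ne_zero σ)] with t htx ht
          exact rpow_neg_le_of_rpow_inv_le hq0 ht hS (hψ t htx)
      _ = S ^ (q / 2) * ∫⁻ t in Iic x, σ (Iic t) ^ (-(1 / 2) : ℝ) ∂σ :=
        lintegral_const_mul' _ _ (ENNReal.rpow_ne_top_of_nonneg (by positivity) hS)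
      _ ≤ S ^ (q / 2) * (2 * σ (Iic x) ^ (1 / 2 : ℝ)) := by
        gcongr
        exact setLIntegral_measure_Iic_rpow_neg_half_le σ x
  calc (∫⁻ t in Iic x, ψ t ^ (-q) ∂σ) ^ (1 / q)
      ≤ (S ^ (q / 2) * (2 * σ (Iic x) ^ (1 / 2 : ℝ))) ^ (1 / q) :=
        ENNReal.rpow_le_rpow hint (by positivity)
    _ = S ^ (1 / 2 : ℝ) * (2 ^ (1 / q) * (σ (Iic x) ^ (1 / q)) ^ (1 / 2 : ℝ)) := by
      have hinv : (0 : ℝ) ≤ 1 / q := by positivity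
      rw [ENNReal.mul_rpow_of_nonneg _ _ hinv, ENNReal.mul_rpow_of_nonneg _ _ hinv,
        ← ENNReal.rpow_mul, ← ENNReal.rpow_mul, ← ENNReal.rpow_mul, mul_comm (1 / 2 : ℝ),
        show q / 2 * (1 / q) = 1 / 2 by field_simp]
    _ ≤ S ^ (1 / 2 : ℝ) * (2 ^ (1 : ℝ) * (S * ψ x ^ 2) ^ (1 / 2 : ℝ)) := by
      gcongr
      · exact one_le_two
      · exact (div_le_one hq0).2 hq
      · exact hψ x le_rfl
    _ = 2 * S * ψ x := by
      rw [ENNReal.mul_rpow_of_nonneg _ _ one_half_pos.le, ← ENNReal.rpow_natCast (ψ x),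
        ← ENNReal.rpow_mul, ENNReal.rpow_one, mul_left_comm, ← mul_assoc (S ^ _),
        ← ENNReal.rpow_add_of_nonneg _ _ one_half_pos.le one_half_pos.le]
      norm_num [mul_assoc]

theorem setLIntegral_Iic_le_of_rpow_measure_Iic_le {σ : Measure α} {g ψ : α → ℝ≥0∞} {S : ℝ≥0∞}
    {p q : ℝ} {x : α} (hpq : p.HolderConjugate q) (hg : AEMeasurable g σ) (hψm : Measurable ψ)
    (hψtop : ∀ t, ψ t ≠ ⊤) (hS : S ≠ ⊤) (hψ : ∀ t ≤ x, σ (Iic t) ^ (1 / q) ≤ S * ψ t ^ 2) :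
    ∫⁻ t in Iic x, g t ∂σ ≤ 2 * S * ψ x * (∫⁻ t in Iic x, (g t * ψ t) ^ p ∂σ) ^ (1 / p) := by
  have hψ0 : ∀ᵐ t ∂σ.restrict (Iic x), ψ t ≠ 0 := by
    filter_upwards [ae_restrict_mem measurableSet_Iic,
      ae_restrict_of_ae (ae_measure_Iic_ne_zero σ)] with t htx ht hψt
    have := hψ t htx
    simp [hψt, ENNReal.rpow_eq_zero_iff, ht, hpq.symm.pos.not_gt] at this
  calc ∫⁻ t in Iic x, g t ∂σ
      = ∫⁻ t in Iic x, ((fun t => g t * ψ t) * fun t => (ψ t)⁻¹) t ∂σ := by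
        refine lintegral_congr_ae ?_
        filter_upwards [hψ0] with t ht
        simp only [Pi.mul_apply, mul_assoc, ENNReal.mul_inv_cancel ht (hψtop t), mul_one]
    _ ≤ (∫⁻ t in Iic x, (g t * ψ t) ^ p ∂σ) ^ (1 / p) *
        (∫⁻ t in Iic x, (ψ t)⁻¹ ^ q ∂σ) ^ (1 / q) :=
      ENNReal.lintegral_mul_le_Lp_mul_Lq _ hpq
        (hg.restrict.mul hψm.aemeasurable) hψm.inv.aemeasurable
    _ ≤ (∫⁻ t in Iic x, (g t * ψ t) ^ p ∂σ) ^ (1 / p) * (2 * S * ψ x) := by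
      simp only [ENNReal.inv_rpow, ← ENNReal.rpow_neg]
      gcongr
      exact lintegral_rpow_neg_rpow_inv_le hpq.symm.lt.le hS hψ
    _ = _ := mul_comm _ _

theorem lintegral_setLIntegral_Iic_swap {μ ν : Measure α} [SFinite μ] [SFinite ν]
    {k : α → α → ℝ≥0∞} (hk : Measurable (Function.uncurry k)) :
    ∫⁻ x, ∫⁻ t in Iic x, k x t ∂ν ∂μ = ∫⁻ t, ∫⁻ x in Ici t, k x t ∂μ ∂ν := by
  have hle : MeasurableSet {z : α × α | z.2 ≤ z.1} := measurableSet_le measurable_snd measurable_fst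
  calc ∫⁻ x, ∫⁻ t in Iic x, k x t ∂ν ∂μ
      = ∫⁻ x, ∫⁻ t, {z : α × α | z.2 ≤ z.1}.indicator (Function.uncurry k) (x, t) ∂ν ∂μ :=
        lintegral_congr fun x => (lintegral_indicator measurableSet_Iic (k x)).symm
    _ = ∫⁻ t, ∫⁻ x, {z : α × α | z.2 ≤ z.1}.indicator (Function.uncurry k) (x, t) ∂μ ∂ν :=
        lintegral_lintegral_swap (hk.indicator hle).aemeasurable
    _ = ∫⁻ t, ∫⁻ x in Ici t, k x t ∂μ ∂ν :=
        lintegral_congr fun t => lintegral_indicator measurableSet_Ici fun x => k x t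

theorem lintegral_setLIntegral_measure_Ici_rpow_neg_half_le (μ ν : Measure α) [SFinite μ]
    [SFinite ν] :
    ∫⁻ x, ∫⁻ t in Iic x, μ (Ici x) ^ (-(1 / 2) : ℝ) * μ (Ici t) ^ (-(1 / 2) : ℝ) ∂ν ∂μ ≤
      2 * ν univ := by
  have hm : Measurable fun t => μ (Ici t) ^ (-(1 / 2) : ℝ) := (measurable_measure_Ici μ).pow_const _
  rw [lintegral_setLIntegral_Iic_swap ((hm.comp measurable_fst).mul (hm.comp measurable_snd)),
    ← lintegral_const]
  refine lintegral_mono fun t => ?_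
  calc ∫⁻ x in Ici t, μ (Ici x) ^ (-(1 / 2) : ℝ) * μ (Ici t) ^ (-(1 / 2) : ℝ) ∂μ
      = (∫⁻ x in Ici t, μ (Ici x) ^ (-(1 / 2) : ℝ) ∂μ) * μ (Ici t) ^ (-(1 / 2) : ℝ) :=
        lintegral_mul_const _ hm
    _ ≤ 2 * μ (Ici t) ^ (1 / 2 : ℝ) * μ (Ici t) ^ (-(1 / 2) : ℝ) := by
      gcongr
      exact setLIntegral_measure_Ici_rpow_neg_half_le μ t
    _ ≤ 2 := by
      rw [mul_assoc, ENNReal.rpow_neg]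
      exact mul_le_of_le_one_right' (ENNReal.mul_inv_le_one _)

end LinearOrder

section Young

variable {Φ Φinv : ℝ → ℝ}

theorem IsYoung.monotoneOn (hΦ : IsYoung Φ) : MonotoneOn Φ (Ici 0) := by
  obtain ⟨hconv, -, hzero, hnonneg, -⟩ := hΦ
  intro s hs t _ hst
  simpa [hzero, hnonneg t] using
    hconv.le_max_of_mem_Icc (mem_univ 0) (mem_univ t) ⟨hs, hst⟩

theorem IsYoung.map_abs (hΦ : IsYoung Φ) (t : ℝ) : Φ |t| = Φ t := by
  rcases abs_choice t with h | h <;> simp only [h, hΦ.2.1]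

theorem IsYoungInv.monotoneOn (hinv : IsYoungInv Φ Φinv) (hΦ : IsYoung Φ) :
    MonotoneOn Φinv (Ici 0) := by
  obtain ⟨hnonneg, hright, -⟩ := hinv
  intro s hs t ht hst
  by_contra! hlt
  have hts : t ≤ s := by
    simpa only [hright t ht, hright s hs] using
      hΦ.monotoneOn (hnonneg t ht) (hnonneg s hs) hlt.le
  exact hlt.ne (congrArg Φinv (hts.antisymm hst))

theorem IsYoungInv.pos (hinv : IsYoungInv Φ Φinv) (hΦ : IsYoung Φ) {t : ℝ} (ht : 0 < t) :
    0 < Φinv t := by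
  refine (hinv.1 t ht.le).lt_of_ne' fun h => ht.ne' ?_
  rw [← hinv.2.1 t ht.le, h, hΦ.2.2.1]

theorem map_integral_le_of_measure_univ_le_one {Ω : Type*} [MeasurableSpace Ω] {ν : Measure Ω}
    {φ : ℝ → ℝ} {h : Ω → ℝ} (hφ : ConvexOn ℝ univ φ) (hφ0 : φ 0 ≤ 0) (hν : ν univ ≤ 1)
    (hh : Integrable h ν) (hφh : Integrable (φ ∘ h) ν) : φ (∫ t, h t ∂ν) ≤ ∫ t, φ (h t) ∂ν := by
  rcases eq_zero_or_neZero ν with rfl | hν0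
  · simpa using hφ0
  have : IsFiniteMeasure ν := ⟨hν.trans_lt ENNReal.one_lt_top⟩
  have hν1 : ν.real univ ≤ 1 := ENNReal.toReal_le_of_le_ofReal zero_le_one (by simpa using hν)
  calc φ (∫ t, h t ∂ν) = φ (ν.real univ • ⨍ t, h t ∂ν + (1 - ν.real univ) • 0) := by
        rw [measure_smul_average, smul_zero, add_zero]
    _ ≤ ν.real univ • φ (⨍ t, h t ∂ν) + (1 - ν.real univ) • φ 0 :=
      hφ.2 (mem_univ _) (mem_univ _) measureReal_nonneg (sub_nonneg.2 hν1) (by ring)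
    _ ≤ ν.real univ • ⨍ t, φ (h t) ∂ν + 0 := by
      gcongr
      · exact hφ.map_average_le (hφ.continuousOn isOpen_univ) isClosed_univ (by simp) hh hφh
      · exact mul_nonpos_of_nonneg_of_nonpos (sub_nonneg.2 hν1) hφ0
    _ = ∫ t, φ (h t) ∂ν := by rw [add_zero, measure_smul_average]

theorem IsYoung.ofReal_map_le_lintegral {Ω : Type*} [MeasurableSpace Ω] {ν : Measure Ω}
    {h : Ω → ℝ} {p y : ℝ} (hΦ : IsYoung Φ) (hp : 0 < p)
    (hΛ : ConvexOn ℝ univ fun t => Φ (|t| ^ (1 / p))) (hν : ν univ ≤ 1) (hh : Measurable h)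
    (hh0 : ∀ t, 0 ≤ h t) (hint : ∫⁻ t, ENNReal.ofReal (h t) ^ p ∂ν ≠ ⊤) (hy : 0 ≤ y)
    (hyle : ENNReal.ofReal y ≤ (∫⁻ t, ENNReal.ofReal (h t) ^ p ∂ν) ^ (1 / p)) :
    ENNReal.ofReal (Φ y) ≤ ∫⁻ t, ENNReal.ofReal (Φ (h t)) ∂ν := by
  rcases eq_or_ne (∫⁻ t, ENNReal.ofReal (Φ (h t)) ∂ν) ⊤ with htop | htop
  · exact htop ▸ le_top
  have hΦc : Continuous Φ := continuousOn_univ.1 (hΦ.1.continuousOn isOpen_univ)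
  have hhp0 : ∀ t, 0 ≤ h t ^ p := fun t => Real.rpow_nonneg (hh0 t) p
  have hroot : ∀ t, |h t ^ p| ^ (1 / p) = h t := fun t => by
    rw [abs_of_nonneg (hhp0 t), ← Real.rpow_mul (hh0 t), mul_one_div_cancel hp.ne', Real.rpow_one]
  simp only [ENNReal.ofReal_rpow_of_nonneg (hh0 _) hp.le] at hint hyle
  have hhp : Integrable (fun t => h t ^ p) ν :=
    (lintegral_ofReal_ne_top_iff_integrable (hh.pow_const p).aestronglyMeasurable
      (Eventually.of_forall hhp0)).1 hint
  have hΦh : Integrable (fun t => Φ (h t)) ν :=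
    (lintegral_ofReal_ne_top_iff_integrable (hΦc.measurable.comp hh).aestronglyMeasurable
      (Eventually.of_forall fun t => hΦ.2.2.2.1 _)).1 htop
  have hI : 0 ≤ ∫ t, h t ^ p ∂ν := integral_nonneg hhp0
  have hyI : y ≤ |∫ t, h t ^ p ∂ν| ^ (1 / p) := by
    rwa [← ofReal_integral_eq_lintegral_ofReal hhp (Eventually.of_forall hhp0),
      ENNReal.ofReal_rpow_of_nonneg hI (by positivity),
      ENNReal.ofReal_le_ofReal_iff (by positivity), ← abs_of_nonneg hI] at hyle
  rw [← ofReal_integral_eq_lintegral_ofReal hΦh (Eventually.of_forall fun t => hΦ.2.2.2.1 _)]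
  refine ENNReal.ofReal_le_ofReal ?_
  calc Φ y ≤ Φ (|∫ t, h t ^ p ∂ν| ^ (1 / p)) := hΦ.monotoneOn hy (hy.trans hyI) hyI
    _ ≤ ∫ t, Φ (|h t ^ p| ^ (1 / p)) ∂ν :=
      map_integral_le_of_measure_univ_le_one hΛ (by simp [hp.ne', hΦ.2.2.1]) hν hhp
        (by simpa only [Function.comp_def, hroot] using hΦh)
    _ = ∫ t, Φ (h t) ∂ν := by simp only [hroot]

end Young

section TailWeight

variable {α : Type*} [LinearOrder α] [MeasurableSpace α] {Φ Φinv : ℝ → ℝ} {μ ν : Measure α}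

/-- The weight `x ↦ Φ⁻¹(μ[x,∞)^{-1/2})` which governs both the Hardy condition and the modular
estimate. It carries no information at points with `μ[x,∞) = 0`, where the paper's value is `∞`
but `0 ^ (-1/2) = 0` in `ℝ`. -/
def tailWeight (Φinv : ℝ → ℝ) (μ : Measure α) (x : α) : ℝ :=
  Φinv ((μ (Ici x)).toReal ^ (-(1 / 2) : ℝ))

theorem tailWeight_nonneg (hinv : IsYoungInv Φ Φinv) (x : α) : 0 ≤ tailWeight Φinv μ x :=
  hinv.1 _ (by positivity)

theorem tailWeight_mono (hΦ : IsYoung Φ) (hinv : IsYoungInv Φ Φinv) {t x : α} (htx : t ≤ x)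
    (hx : μ (Ici x) ≠ 0) : tailWeight Φinv μ t ≤ tailWeight Φinv μ x := by
  refine hinv.monotoneOn hΦ (mem_Ici.2 (by positivity)) (mem_Ici.2 (by positivity)) ?_
  rw [ENNReal.toReal_rpow, ENNReal.toReal_rpow]
  refine ENNReal.toReal_mono (by simp [ENNReal.rpow_eq_top_iff, hx]) ?_
  simp only [ENNReal.rpow_neg]
  gcongr

theorem ofReal_map_tailWeight_le (hinv : IsYoungInv Φ Φinv) (x : α) :
    ENNReal.ofReal (Φ (tailWeight Φinv μ x)) ≤ μ (Ici x) ^ (-(1 / 2) : ℝ) := by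
  rw [tailWeight, hinv.2.1 _ (by positivity), ENNReal.toReal_rpow]
  exact ENNReal.ofReal_toReal_le

theorem ofReal_map_mul_tailWeight_le (hΦ : IsYoung Φ) (hsub : Submult Φ)
    (hinv : IsYoungInv Φ Φinv) (x t : α) :
    ENNReal.ofReal (Φ (Φinv (1 / 2) * tailWeight Φinv μ x * tailWeight Φinv μ t)) ≤
      2⁻¹ * (μ (Ici x) ^ (-(1 / 2) : ℝ) * μ (Ici t) ^ (-(1 / 2) : ℝ)) := by
  have hκ : 0 ≤ Φinv (1 / 2) := hinv.1 _ one_half_pos.le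
  have hx := tailWeight_nonneg (μ := μ) hinv x
  have ht := tailWeight_nonneg (μ := μ) hinv t
  have hΦ0 := hΦ.2.2.2.1
  calc ENNReal.ofReal (Φ (Φinv (1 / 2) * tailWeight Φinv μ x * tailWeight Φinv μ t))
      ≤ ENNReal.ofReal (1 / 2 * (Φ (tailWeight Φinv μ x) * Φ (tailWeight Φinv μ t))) := by
        refine ENNReal.ofReal_le_ofReal ((hsub _ _ (mul_nonneg hκ hx) ht).trans ?_)
        rw [← mul_assoc]
        gcongr
        · exact hΦ0 _
        · exact (hsub _ _ hκ hx).trans_eq (by rw [hinv.2.1 _ one_half_pos.le])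
    _ = 2⁻¹ * (ENNReal.ofReal (Φ (tailWeight Φinv μ x)) *
        ENNReal.ofReal (Φ (tailWeight Φinv μ t))) := by
      rw [ENNReal.ofReal_mul one_half_pos.le, ENNReal.ofReal_mul (hΦ0 _), one_div,
        ENNReal.ofReal_inv_of_pos two_pos, ENNReal.ofReal_ofNat]
    _ ≤ _ := by
      gcongr <;> exact ofReal_map_tailWeight_le hinv _

variable [TopologicalSpace α] [OrderTopology α] [BorelSpace α]

theorem measurable_tailWeight (hΦ : IsYoung Φ) (hinv : IsYoungInv Φ Φinv) :
    Measurable (tailWeight Φinv μ) := by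
  have hmono : Monotone fun s => Φinv (max s 0) := fun s t hst =>
    hinv.monotoneOn hΦ (le_max_right s 0) (le_max_right t 0) (max_le_max_right 0 hst)
  have hpow : Measurable fun x => (μ (Ici x)).toReal ^ (-(1 / 2) : ℝ) :=
    (measurable_measure_Ici μ).ennreal_toReal.pow_const _
  convert hmono.measurable.comp hpow
  exact funext fun x => congrArg Φinv (max_eq_left (by positivity)).symm

theorem ofReal_map_le_setLIntegral_measure_Ici (hΦ : IsYoung Φ) (hsub : Submult Φ)
    (hinv : IsYoungInv Φ Φinv) {p : ℝ} (hp : 0 < p)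
    (hΛ : ConvexOn ℝ univ fun t => Φ (|t| ^ (1 / p))) (hν : ν univ ≤ 1) {x : α}
    (hx : μ (Ici x) ≠ 0) {y : ℝ} (hy : 0 ≤ y)
    (hyle : ENNReal.ofReal y ≤ ENNReal.ofReal (Φinv (1 / 2) * tailWeight Φinv μ x) *
      (∫⁻ t in Iic x, ENNReal.ofReal (tailWeight Φinv μ t) ^ p ∂ν) ^ (1 / p)) :
    ENNReal.ofReal (Φ y) ≤
      2⁻¹ * ∫⁻ t in Iic x, μ (Ici x) ^ (-(1 / 2) : ℝ) * μ (Ici t) ^ (-(1 / 2) : ℝ) ∂ν := by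
  set ψ := tailWeight Φinv μ
  have hψ0 : ∀ t, 0 ≤ ψ t := tailWeight_nonneg hinv
  have hψm : Measurable ψ := measurable_tailWeight hΦ hinv
  set A := Φinv (1 / 2) * ψ x
  have hA : 0 ≤ A := mul_nonneg (hinv.1 _ one_half_pos.le) (hψ0 x)
  have hνx : ν.restrict (Iic x) univ ≤ 1 := (Measure.restrict_apply_le _ _).trans hν
  have hψint : ∫⁻ t in Iic x, ENNReal.ofReal (ψ t) ^ p ∂ν ≠ ⊤ := by
    refine ne_top_of_le_ne_top (b := ENNReal.ofReal (ψ x) ^ p * 1) (by finiteness) ?_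
    refine (setLIntegral_mono' measurableSet_Iic fun t ht => ?_).trans
      ((lintegral_const _).trans_le (mul_le_mul_right hνx _))
    have := tailWeight_mono hΦ hinv ht hx
    gcongr
  have hscale : ∫⁻ t in Iic x, ENNReal.ofReal (A * ψ t) ^ p ∂ν =
      ENNReal.ofReal A ^ p * ∫⁻ t in Iic x, ENNReal.ofReal (ψ t) ^ p ∂ν := by
    simp only [ENNReal.ofReal_mul hA, ENNReal.mul_rpow_of_nonneg _ _ hp.le]
    exact lintegral_const_mul' _ _ (by finiteness)
  calc ENNReal.ofReal (Φ y) ≤ ∫⁻ t in Iic x, ENNReal.ofReal (Φ (A * ψ t)) ∂ν := by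
        refine hΦ.ofReal_map_le_lintegral hp hΛ hνx (hψm.const_mul A)
          (fun t => mul_nonneg hA (hψ0 t)) ?_ hy ?_
        · rw [hscale]
          finiteness
        · rwa [hscale, ENNReal.mul_rpow_of_nonneg _ _ (by positivity), ← ENNReal.rpow_mul,
            mul_one_div_cancel hp.ne', ENNReal.rpow_one]
    _ ≤ ∫⁻ t in Iic x, 2⁻¹ * (μ (Ici x) ^ (-(1 / 2) : ℝ) * μ (Ici t) ^ (-(1 / 2) : ℝ)) ∂ν :=
      lintegral_mono fun t => ofReal_map_mul_tailWeight_le hΦ hsub hinv x t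
    _ = _ := lintegral_const_mul' _ _ (by simp)

end TailWeight

/-- The density `h` against `σ` rescaled to total mass one, so that Jensen's inequality applies; it
is the zero measure when `∫ h dσ = 0`. -/
def normalizedDensity {Ω : Type*} [MeasurableSpace Ω] (σ : Measure Ω) (h : Ω → ℝ≥0∞) : Measure Ω :=
  (∫⁻ t, h t ∂σ)⁻¹ • σ.withDensity h

theorem normalizedDensity_univ_le_one {Ω : Type*} [MeasurableSpace Ω] (σ : Measure Ω)
    (h : Ω → ℝ≥0∞) : normalizedDensity σ h univ ≤ 1 := by
  rw [normalizedDensity, Measure.smul_apply, withDensity_apply _ MeasurableSet.univ,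
    Measure.restrict_univ]
  exact ENNReal.inv_mul_le_one _

theorem setLIntegral_mul_eq_normalizedDensity {Ω : Type*} [MeasurableSpace Ω] {σ : Measure Ω}
    {h k : Ω → ℝ≥0∞} {s : Set Ω} (hh : AEMeasurable h σ) (hint : ∫⁻ t, h t ∂σ ≠ ⊤)
    (hs : MeasurableSet s) (hk : Measurable k) :
    ∫⁻ t in s, h t * k t ∂σ = (∫⁻ t, h t ∂σ) * ∫⁻ t in s, k t ∂normalizedDensity σ h := by
  rw [normalizedDensity, Measure.restrict_smul, lintegral_smul_measure, restrict_withDensity hs,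
    lintegral_withDensity_eq_lintegral_mul₀ hh.restrict hk.aemeasurable, smul_eq_mul, ← mul_assoc]
  rcases eq_or_ne (∫⁻ t, h t ∂σ) 0 with h0 | h0
  · have hzero : ∀ᵐ t ∂σ.restrict s, h t * k t = 0 :=
      ae_restrict_of_ae (((lintegral_eq_zero_iff' hh).1 h0).mono fun t ht => by simp [ht])
    rw [lintegral_congr_ae hzero, h0]
    simp
  · rw [ENNReal.mul_inv_cancel h0 hint, one_mul]
    rfl

theorem luxNormGen_le_of_forall_lintegral_le_one {Ω : Type*} [MeasurableSpace Ω] {Φ : ℝ → ℝ}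
    {μ : Measure Ω} {F : Ω → ℝ} {K : ℝ≥0∞}
    (h : ∀ c : ℝ, 0 < c → K ≤ ENNReal.ofReal c →
      ∫⁻ x, ENNReal.ofReal (Φ (F x / c)) ∂μ ≤ 1) :
    luxNormGen Φ μ F ≤ K := by
  refine ENNReal.le_of_forall_pos_le_add fun ε hε hK => ?_
  have hKε : K + ε = ENNReal.ofReal (K + ε).toReal := (ENNReal.ofReal_toReal (by finiteness)).symm
  have hpos : 0 < (K + ε).toReal := ENNReal.toReal_pos (by positivity) (by finiteness)
  exact sInf_le ⟨_, hpos, hKε, h _ hpos (hKε ▸ le_self_add)⟩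

theorem luxNormGen_congr_ae {Ω : Type*} [MeasurableSpace Ω] {Φ : ℝ → ℝ} {ν : Measure Ω}
    {F G : Ω → ℝ} (hFG : F =ᵐ[ν] G) : luxNormGen Φ ν F = luxNormGen Φ ν G := by
  have hmod : ∀ c : ℝ, ∫⁻ t, ENNReal.ofReal (Φ (F t / c)) ∂ν =
      ∫⁻ t, ENNReal.ofReal (Φ (G t / c)) ∂ν := fun c =>
    lintegral_congr_ae (hFG.mono fun t ht => by simp only [ht])
  simp only [luxNormGen, hmod]

section Hardy

variable {α : Type*} [LinearOrder α] [TopologicalSpace α] [OrderTopology α]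
  [SecondCountableTopology α] [MeasurableSpace α] [BorelSpace α] {Φ Φinv : ℝ → ℝ}
  {μ σ : Measure α} {p q c : ℝ} {S : ℝ≥0∞} {g : α → ℝ}

theorem enorm_setIntegral_Iic_le {x : α} (hΦ : IsYoung Φ) (hinv : IsYoungInv Φ Φinv)
    (hpq : p.HolderConjugate q) (hS : S ≠ ⊤)
    (hσ : ∀ t ≤ x, (ENNReal.ofReal (tailWeight Φinv μ t) ^ 2)⁻¹ * σ (Iic t) ^ (1 / q) ≤ S)
    (hg : AEMeasurable g σ) :
    ‖∫ t in Iic x, g t ∂σ‖ₑ ≤ 2 * S * ENNReal.ofReal (tailWeight Φinv μ x) *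
      (∫⁻ t in Iic x, ‖g t‖ₑ ^ p * ENNReal.ofReal (tailWeight Φinv μ t) ^ p ∂σ) ^ (1 / p) := by
  simp only [← ENNReal.mul_rpow_of_nonneg _ _ hpq.nonneg]
  refine (enorm_integral_le_lintegral_enorm _).trans <| setLIntegral_Iic_le_of_rpow_measure_Iic_le
    hpq hg.enorm (measurable_tailWeight hΦ hinv).ennreal_ofReal (fun _ => ENNReal.ofReal_ne_top)
    hS fun t ht => ?_
  rw [← ENNReal.div_le_iff_le_mul (Or.inr hS) (Or.inl (by finiteness)), ENNReal.div_eq_inv_mul]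
  exact hσ t ht

theorem ofReal_abs_setIntegral_Iic_div_le {x : α} (hΦ : IsYoung Φ) (hinv : IsYoungInv Φ Φinv)
    (hpq : p.HolderConjugate q) (hS : S ≠ ⊤)
    (hσ : ∀ t ≤ x, (ENNReal.ofReal (tailWeight Φinv μ t) ^ 2)⁻¹ * σ (Iic t) ^ (1 / q) ≤ S)
    (hg : AEMeasurable g σ) (hgp : ∫⁻ t, ‖g t‖ₑ ^ p ∂σ ≠ ⊤) (hc : 0 < c)
    (hcle : ENNReal.ofReal (2 * (Φinv (1 / 2))⁻¹) * S * (∫⁻ t, ‖g t‖ₑ ^ p ∂σ) ^ (1 / p) ≤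
      ENNReal.ofReal c) :
    ENNReal.ofReal |(∫ t in Iic x, g t ∂σ) / c| ≤
      ENNReal.ofReal (Φinv (1 / 2) * tailWeight Φinv μ x) *
        (∫⁻ t in Iic x, ENNReal.ofReal (tailWeight Φinv μ t) ^ p
          ∂normalizedDensity σ fun t => ‖g t‖ₑ ^ p) ^ (1 / p) := by
  set N := (∫⁻ t, ‖g t‖ₑ ^ p ∂σ) ^ (1 / p)
  set ψ := fun x => ENNReal.ofReal (tailWeight Φinv μ x)
  set J := (∫⁻ t in Iic x, ψ t ^ p ∂normalizedDensity σ fun t => ‖g t‖ₑ ^ p) ^ (1 / p)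
  have hψm : Measurable ψ := (measurable_tailWeight hΦ hinv).ennreal_ofReal
  have hκ : 0 < Φinv (1 / 2) := hinv.pos hΦ one_half_pos
  have hconst : 2 * S * N ≤ ENNReal.ofReal (Φinv (1 / 2)) * ENNReal.ofReal c :=
    calc 2 * S * N = ENNReal.ofReal (Φinv (1 / 2)) *
          (ENNReal.ofReal (2 * (Φinv (1 / 2))⁻¹) * S * N) := by
          rw [← mul_assoc, ← mul_assoc, ← ENNReal.ofReal_mul hκ.le, mul_left_comm,
            mul_inv_cancel₀ hκ.ne', mul_one, ENNReal.ofReal_ofNat]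
      _ ≤ _ := by gcongr
  rw [abs_div, abs_of_pos hc, ENNReal.ofReal_div_of_pos hc, ← Real.enorm_eq_ofReal_abs]
  refine ENNReal.div_le_of_le_mul ?_
  calc ‖∫ t in Iic x, g t ∂σ‖ₑ
      ≤ 2 * S * ψ x * (∫⁻ t in Iic x, ‖g t‖ₑ ^ p * ψ t ^ p ∂σ) ^ (1 / p) :=
        enorm_setIntegral_Iic_le hΦ hinv hpq hS hσ hg
    _ = 2 * S * N * (ψ x * J) := by
      rw [setLIntegral_mul_eq_normalizedDensity (hg.enorm.pow_const p) hgp measurableSet_Iic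
          (hψm.pow_const p), ENNReal.mul_rpow_of_nonneg _ _ hpq.one_div_nonneg]
      ring
    _ ≤ ENNReal.ofReal (Φinv (1 / 2)) * ENNReal.ofReal c * (ψ x * J) := by gcongr
    _ = ENNReal.ofReal (Φinv (1 / 2) * tailWeight Φinv μ x) * J * ENNReal.ofReal c := by
      rw [ENNReal.ofReal_mul hκ.le]
      ring

theorem lintegral_map_setIntegral_Iic_div_le_one [SFinite μ] (hΦ : IsYoung Φ) (hsub : Submult Φ)
    (hinv : IsYoungInv Φ Φinv) (hpq : p.HolderConjugate q)
    (hΛ : ConvexOn ℝ univ fun t => Φ (|t| ^ (1 / p))) (hS : S ≠ ⊤)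
    (hσ : ∀ x, μ (Ici x) ≠ 0 →
      (ENNReal.ofReal (tailWeight Φinv μ x) ^ 2)⁻¹ * σ (Iic x) ^ (1 / q) ≤ S)
    (hg : AEMeasurable g σ) (hgp : ∫⁻ t, ‖g t‖ₑ ^ p ∂σ ≠ ⊤) (hc : 0 < c)
    (hcle : ENNReal.ofReal (2 * (Φinv (1 / 2))⁻¹) * S * (∫⁻ t, ‖g t‖ₑ ^ p ∂σ) ^ (1 / p) ≤
      ENNReal.ofReal c) :
    ∫⁻ x, ENNReal.ofReal (Φ ((∫ t in Iic x, g t ∂σ) / c)) ∂μ ≤ 1 := by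
  set ν := normalizedDensity σ fun t => ‖g t‖ₑ ^ p
  have hν : ν univ ≤ 1 := normalizedDensity_univ_le_one σ _
  have : IsFiniteMeasure ν := ⟨hν.trans_lt ENNReal.one_lt_top⟩
  calc ∫⁻ x, ENNReal.ofReal (Φ ((∫ t in Iic x, g t ∂σ) / c)) ∂μ
      ≤ ∫⁻ x, 2⁻¹ * ∫⁻ t in Iic x,
          μ (Ici x) ^ (-(1 / 2) : ℝ) * μ (Ici t) ^ (-(1 / 2) : ℝ) ∂ν ∂μ := by
        refine lintegral_mono_ae ?_
        filter_upwards [ae_measure_Ici_ne_zero μ] with x hx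
        rw [← hΦ.map_abs]
        have hσx : ∀ t ≤ x,
            (ENNReal.ofReal (tailWeight Φinv μ t) ^ 2)⁻¹ * σ (Iic t) ^ (1 / q) ≤ S := fun t htx =>
          hσ t fun ht => hx (measure_mono_null (Ici_subset_Ici.2 htx) ht)
        exact ofReal_map_le_setLIntegral_measure_Ici hΦ hsub hinv hpq.pos hΛ hν hx (abs_nonneg _)
          (ofReal_abs_setIntegral_Iic_div_le hΦ hinv hpq hS hσx hg hgp hc hcle)
    _ = 2⁻¹ * ∫⁻ x, ∫⁻ t in Iic x,
          μ (Ici x) ^ (-(1 / 2) : ℝ) * μ (Ici t) ^ (-(1 / 2) : ℝ) ∂ν ∂μ :=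
        lintegral_const_mul' _ _ (by simp)
    _ ≤ 2⁻¹ * (2 * ν univ) := by
        gcongr
        exact lintegral_setLIntegral_measure_Ici_rpow_neg_half_le μ ν
    _ ≤ 1 := by
        rw [← mul_assoc, ENNReal.inv_mul_cancel two_ne_zero ENNReal.ofNat_ne_top, one_mul]
        exact hν

theorem orlicz_hardy_left_weighted_general [SFinite μ] (hΦ : IsYoung Φ) (hsub : Submult Φ)
    (hinv : IsYoungInv Φ Φinv) (hpq : p.HolderConjugate q)
    (hΛ : ConvexOn ℝ univ fun t => Φ (|t| ^ (1 / p))) (hS : S ≠ ⊤)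
    (hσ : ∀ x, μ (Ici x) ≠ 0 →
      (ENNReal.ofReal (tailWeight Φinv μ x) ^ 2)⁻¹ * σ (Iic x) ^ (1 / q) ≤ S)
    (hg : AEMeasurable g σ) (hgp : ∫⁻ t, ‖g t‖ₑ ^ p ∂σ ≠ ⊤) :
    luxNormGen Φ μ (fun x => ∫ t in Iic x, g t ∂σ) ≤
      ENNReal.ofReal (2 * (Φinv (1 / 2))⁻¹) * S * (∫⁻ t, ‖g t‖ₑ ^ p ∂σ) ^ (1 / p) :=
  luxNormGen_le_of_forall_lintegral_le_one fun _ hc hcle =>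
    lintegral_map_setIntegral_Iic_div_le_one hΦ hsub hinv hpq hΛ hS hσ hg hgp hc hcle

end Hardy

/-- The measure `μ(t) dt` on `[a,b]`, regarded as a measure on `ℝ`. -/
def weightMeasure (μ : ℝ → ℝ) (a b : ℝ) : Measure ℝ :=
  (volume.restrict (Icc a b)).withDensity fun t => ENNReal.ofReal (μ t)

section WeightMeasure

variable {a b p q x : ℝ} {Φ Φinv μ w τ f g h : ℝ → ℝ}

instance : SFinite (weightMeasure μ a b) :=
  inferInstanceAs (SFinite (Measure.withDensity _ _))

theorem ae_weightMeasure_mem_Icc : ∀ᵐ t ∂weightMeasure μ a b, t ∈ Icc a b :=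
  withDensity_absolutelyContinuous _ _ (ae_restrict_mem measurableSet_Icc)

theorem lintegral_weightMeasure (hμ : Measurable μ) (k : ℝ → ℝ≥0∞) :
    ∫⁻ t, k t ∂weightMeasure μ a b = ∫⁻ t in Icc a b, ENNReal.ofReal (μ t) * k t :=
  lintegral_withDensity_eq_lintegral_mul_non_measurable _ hμ.ennreal_ofReal
    (Eventually.of_forall fun _ => ENNReal.ofReal_lt_top) k

theorem weightMeasure_apply {s : Set ℝ} (hs : MeasurableSet s) :
    weightMeasure μ a b s = ∫⁻ t in Icc a b ∩ s, ENNReal.ofReal (μ t) := by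
  rw [weightMeasure, withDensity_apply _ hs, Measure.restrict_restrict hs, inter_comm]

theorem weightMeasure_Ici (hx : a ≤ x) : weightMeasure μ a b (Ici x) = wInt μ x b := by
  rw [weightMeasure_apply measurableSet_Ici, ← Ici_inter_Iic, inter_right_comm, Ici_inter_Ici,
    sup_eq_right.2 hx, Ici_inter_Iic, wInt]

theorem weightMeasure_Iic (hx : x ≤ b) :
    weightMeasure μ a b (Iic x) = ∫⁻ t in Icc a x, ENNReal.ofReal (μ t) := by
  rw [weightMeasure_apply measurableSet_Iic, ← Ici_inter_Iic (a := a), inter_assoc, Iic_inter_Iic,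
    inf_eq_right.2 hx, Ici_inter_Iic]

theorem setIntegral_Iic_weightMeasure (hh : Measurable h) (hh0 : ∀ t, 0 ≤ h t)
    (hx : x ∈ Icc a b) :
    ∫ t in Iic x, g t ∂weightMeasure h a b = ∫ t in a..x, h t * g t := by
  rw [weightMeasure, setIntegral_withDensity_eq_setIntegral_toReal_smul hh.ennreal_ofReal
    (Eventually.of_forall fun _ => ENNReal.ofReal_lt_top) _ measurableSet_Iic,
    Measure.restrict_restrict measurableSet_Iic, inter_comm, ← Ici_inter_Iic, inter_assoc,
    Iic_inter_Iic, inf_eq_right.2 hx.2, Ici_inter_Iic, integral_Icc_eq_integral_Ioc,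
    ← intervalIntegral.integral_of_le hx.1]
  simp only [ENNReal.toReal_ofReal (hh0 _), smul_eq_mul]

theorem luxNorm_eq_luxNormGen_weightMeasure (hμ : Measurable μ) (hμ0 : ∀ t, 0 ≤ μ t) :
    luxNorm Φ μ a b f = luxNormGen Φ (weightMeasure μ a b) f := by
  simp only [luxNorm, luxNormGen, lintegral_weightMeasure hμ, ENNReal.ofReal_mul' (hμ0 _),
    mul_comm (ENNReal.ofReal (μ _))]

theorem inv_tailWeight_mul_weightMeasure_Iic_le (hq : 0 < q) {S : ℝ≥0∞}
    (hS : ∀ x ∈ Ioo a b, (ENNReal.ofReal (Φinv ((wInt μ x b).toReal ^ (-(1 / 2) : ℝ))) ^ 2)⁻¹ *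
      (∫⁻ t in Icc a x, ENNReal.ofReal (h t)) ^ (1 / q) ≤ S)
    (hx : weightMeasure μ a b (Ici x) ≠ 0) :
    (ENNReal.ofReal (tailWeight Φinv (weightMeasure μ a b) x) ^ 2)⁻¹ *
      weightMeasure h a b (Iic x) ^ (1 / q) ≤ S := by
  have hxb : x < b := by
    by_contra! hbx
    rw [weightMeasure_apply measurableSet_Ici] at hx
    refine hx (setLIntegral_measure_zero _ _ (measure_mono_null ?_ (measure_singleton b)))
    exact fun t ht => le_antisymm ht.1.2 (hbx.trans ht.2)
  rcases le_or_gt x a with hxa | hax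
  · have hzero : weightMeasure h a b (Iic x) = 0 := by
      rw [weightMeasure_Iic hxb.le]
      refine setLIntegral_measure_zero _ _ (measure_mono_null ?_ (measure_singleton a))
      exact fun t ht => le_antisymm (ht.2.trans hxa) ht.1
    simp [hzero, hq]
  · rw [tailWeight, weightMeasure_Ici hax.le, weightMeasure_Iic hxb.le]
    exact hS x ⟨hax, hxb⟩

/-- The weight `τ^q w^{1-q}` whose integrals enter the Hardy condition. It is the density `σ` for
which `f τ = g σ` turns `∫ |f|^p w` into `∫ |g|^p σ`. -/
def dualWeight (q : ℝ) (τ w : ℝ → ℝ) (t : ℝ) : ℝ :=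
  τ t ^ q * w t ^ (1 - q)

theorem dualWeight_nonneg (hτ : ∀ t, 0 ≤ τ t) (hw : ∀ t, 0 ≤ w t) (t : ℝ) :
    0 ≤ dualWeight q τ w t :=
  mul_nonneg (Real.rpow_nonneg (hτ t) _) (Real.rpow_nonneg (hw t) _)

theorem measurable_dualWeight (hτ : Measurable τ) (hw : Measurable w) :
    Measurable (dualWeight q τ w) :=
  (hτ.pow_const _).mul (hw.pow_const _)

theorem dualWeight_pos {t : ℝ} (hτt : 0 < τ t) (hwt : 0 < w t) : 0 < dualWeight q τ w t :=
  mul_pos (Real.rpow_pos_of_pos hτt _) (Real.rpow_pos_of_pos hwt _)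

theorem setIntegral_Iic_div_dualWeight (hτ : IsWeight τ a b) (hw : IsWeight w a b)
    (hx : x ∈ Icc a b) :
    ∫ t in Iic x, f t * τ t / dualWeight q τ w t ∂weightMeasure (dualWeight q τ w) a b =
      ∫ t in a..x, f t * τ t := by
  rw [setIntegral_Iic_weightMeasure (measurable_dualWeight hτ.1 hw.1)
    (dualWeight_nonneg hτ.2.1 hw.2.1) hx]
  refine intervalIntegral.integral_congr_ae ?_
  filter_upwards [(ae_restrict_iff' measurableSet_Icc).1 hτ.2.2,
    (ae_restrict_iff' measurableSet_Icc).1 hw.2.2] with t hτt hwt htx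
  rw [uIoc_of_le hx.1] at htx
  have ht : t ∈ Icc a b := ⟨htx.1.le, htx.2.trans hx.2⟩
  exact mul_div_cancel₀ _ (dualWeight_pos (hτt ht) (hwt ht)).ne'

theorem dualWeight_mul_abs_div_rpow (hpq : p.HolderConjugate q) {t : ℝ} (hτt : 0 < τ t)
    (hwt : 0 < w t) :
    dualWeight q τ w t * |f t * τ t / dualWeight q τ w t| ^ p = |f t| ^ p * w t := by
  have hd : 0 < dualWeight q τ w t := dualWeight_pos hτt hwt
  have hdual : dualWeight q τ w t ^ (1 - p) = τ t ^ (-p) * w t := by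
    have hpq' := hpq.mul_eq_add
    rw [dualWeight, Real.mul_rpow (by positivity) (by positivity), ← Real.rpow_mul hτt.le,
      ← Real.rpow_mul hwt.le, show q * (1 - p) = -p by linarith,
      show (1 - q) * (1 - p) = 1 by linarith, Real.rpow_one]
  calc dualWeight q τ w t * |f t * τ t / dualWeight q τ w t| ^ p
      = |f t| ^ p * τ t ^ p * dualWeight q τ w t ^ (1 - p) := by
        rw [abs_div, abs_mul, abs_of_pos hτt, abs_of_pos hd, Real.div_rpow (by positivity) hd.le,
          Real.mul_rpow (abs_nonneg _) hτt.le, Real.rpow_sub hd, Real.rpow_one]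
        ring
    _ = |f t| ^ p * w t := by
      rw [hdual, Real.rpow_neg hτt.le]
      field_simp

theorem lintegral_enorm_div_dualWeight_rpow (hpq : p.HolderConjugate q) (hτ : IsWeight τ a b)
    (hw : IsWeight w a b) :
    ∫⁻ t, ‖f t * τ t / dualWeight q τ w t‖ₑ ^ p ∂weightMeasure (dualWeight q τ w) a b =
      ∫⁻ t in Icc a b, ENNReal.ofReal (|f t| ^ p * w t) := by
  rw [lintegral_weightMeasure (measurable_dualWeight hτ.1 hw.1)]
  refine lintegral_congr_ae ?_
  filter_upwards [hτ.2.2, hw.2.2] with t hτt hwt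
  rw [Real.enorm_eq_ofReal_abs, ENNReal.ofReal_rpow_of_nonneg (abs_nonneg _) hpq.nonneg,
    ← ENNReal.ofReal_mul (dualWeight_nonneg hτ.2.1 hw.2.1 t),
    dualWeight_mul_abs_div_rpow hpq hτt hwt]

theorem luxNorm_intervalIntegral_eq_luxNormGen (hμ : Measurable μ) (hμ0 : ∀ t, 0 ≤ μ t)
    (hτ : IsWeight τ a b) (hw : IsWeight w a b) :
    luxNorm Φ μ a b (fun x => ∫ t in a..x, f t * τ t) =
      luxNormGen Φ (weightMeasure μ a b) fun x =>
        ∫ t in Iic x, f t * τ t / dualWeight q τ w t ∂weightMeasure (dualWeight q τ w) a b := by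
  rw [luxNorm_eq_luxNormGen_weightMeasure hμ hμ0]
  exact luxNormGen_congr_ae (ae_weightMeasure_mem_Icc.mono fun x hx =>
    (setIntegral_Iic_div_dualWeight hτ hw hx).symm)

end WeightMeasure

/-- Weighted Orlicz–Hardy inequality for `x ↦ ∫ₐ^x f τ`: if `S(p,Φ,μ,τ,w) < ∞` then
`‖∫ₐ^• f τ‖_{L_μ^Φ[a,b]} ≤ C₀(Φ) S(p,Φ,μ,τ,w) ‖f‖_{L_w^p[a,b]}`. -/
theorem orlicz_hardy_left_weighted
    (a b : ℝ) (hab : a < b) (p pc : ℝ) (hp : 1 < p) (hpc : pc = p / (p - 1))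
    (Φ Φinv μ w τ : ℝ → ℝ)
    (hΦ : IsYoung Φ) (hsub : Submult Φ) (hinv : IsYoungInv Φ Φinv)
    (hΛ : ConvexOn ℝ Set.univ (fun t => Φ (|t| ^ (1 / p))))
    (hμ : IsWeight μ a b) (hw : IsWeight w a b) (hτ : IsWeight τ a b)
    (S : ℝ≥0∞)
    (hS : S = ⨆ x ∈ Set.Ioo a b,
      ((ENNReal.ofReal (Φinv ((wInt μ x b).toReal ^ (-(1/2) : ℝ)))) ^ 2)⁻¹ *
        (∫⁻ t in Set.Icc a x, ENNReal.ofReal (τ t ^ pc * w t ^ (1 - pc))) ^ (1 / pc))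
    (hSfin : S < ⊤) :
    ∀ f : ℝ → ℝ, Measurable f →
      (∫⁻ t in Set.Icc a b, ENNReal.ofReal (|f t| ^ p * w t)) < ⊤ →
      luxNorm Φ μ a b (fun x => ∫ t in a..x, f t * τ t)
        ≤ ENNReal.ofReal (2 * (Φinv (1/2))⁻¹) * S * lpNorm w p a b f := by
  subst hS
  have hpq : p.HolderConjugate pc := hpc ▸ Real.HolderConjugate.conjExponent hp
  intro f hf hfp
  rw [luxNorm_intervalIntegral_eq_luxNormGen (q := pc) hμ.1 hμ.2.1 hτ hw, _root_.lpNorm,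
    ← lintegral_enorm_div_dualWeight_rpow hpq hτ hw]
  refine orlicz_hardy_left_weighted_general hΦ hsub hinv hpq hΛ hSfin.ne (fun x hx => ?_) ?_ ?_
  · exact inv_tailWeight_mul_weightMeasure_Iic_le hpq.symm.pos
      (fun y hy => le_iSup₂ (α := ℝ≥0∞) y hy) hx
  · exact ((hf.mul hτ.1).div (measurable_dualWeight hτ.1 hw.1)).aemeasurable
  · rwa [lintegral_enorm_div_dualWeight_rpow hpq hτ hw, ← lt_top_iff_ne_top]
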